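/- Let Ω ⊂ ℝ^d be a bounded C^{1,1} domain and d(x) the distance from x to ∂Ω. Then there exists a regularized distance ρ ∈ C^{1,1}(Ω̄) such that: (i) c d(x) ≤ ρ(x) ≤ C d(x) for all x ∈ Ω with constants c, C > 0; (ii) |Dρ| ≥ C₀ > 0 on ∂Ω; and (iii) for every integer k ≥ 1, the function |D^{k+2} ρ| ρ^k is bounded on Ω. -/

import Mathlib

open MeasureTheory Metric Real
open scoped RealInnerProductSpace ENNReal Topology

noncomputable section

/-- Euclidean space `ℝ^d`. -/
abbrev EucD (d : ℕ) : Type := EuclideanSpace ℝ (Fin d)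

/-- `Ω` is a bounded `C^{1,1}` domain (with `C^{1,1}` character `K`): it is open,
bounded, nonempty, and near every boundary point it is the sublevel set of a `C^1`
defining function with `K`-Lipschitz derivative and nondegenerate gradient. -/
def IsC11Domain (d : ℕ) (Ω : Set (EucD d)) (K : ℝ) : Prop :=
  IsOpen Ω ∧ Bornology.IsBounded Ω ∧ Ω.Nonempty ∧ 0 < K ∧
    ∀ x ∈ frontier Ω, ∃ (ρ : EucD d → ℝ) (r : ℝ), 0 < r ∧
      ContDiff ℝ 1 ρ ∧ LipschitzWith (Real.toNNReal K) (fderiv ℝ ρ) ∧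
      (∀ y ∈ Metric.ball x r, K⁻¹ ≤ ‖fderiv ℝ ρ y‖) ∧
      Ω ∩ Metric.ball x r = {y | ρ y < 0} ∩ Metric.ball x r ∧
      frontier Ω ∩ Metric.ball x r = {y | ρ y = 0} ∩ Metric.ball x r

/-- `n` is the outward unit normal vector field along `∂Ω`. -/
def IsOutwardNormal (d : ℕ) (Ω : Set (EucD d)) (n : EucD d → EucD d) : Prop :=
  ∀ x ∈ frontier Ω, ‖n x‖ = 1 ∧
    ∃ δ : ℝ, 0 < δ ∧ ∀ t : ℝ, 0 < t → t < δ →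
      x + t • n x ∉ closure Ω ∧ x - t • n x ∈ Ω

/-- The surface measure on `∂Ω`: `(d-1)`-dimensional Hausdorff measure. -/
def surfD (d : ℕ) : Measure (EucD d) := MeasureTheory.Measure.hausdorffMeasure ((d : ℝ) - 1)

/-- `u ∈ W^{1,2}(Ω ∩ B_2)` (with boundary trace in `L²(∂Ω ∩ B_2)`), encoded via a
differentiable representative with square-integrable value and gradient. -/
def MemW12Dom (d : ℕ) (Ω : Set (EucD d)) (u : EucD d → ℝ) : Prop :=
  Differentiable ℝ u ∧
    IntegrableOn (fun x => (u x) ^ 2 + ‖gradient u x‖ ^ 2) (Ω ∩ Metric.ball (0 : EucD d) 2) ∧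
    IntegrableOn (fun x => (u x) ^ 2) (frontier Ω ∩ Metric.ball (0 : EucD d) 2) (surfD d)

/-- Weak solution of `div(A Du) = V u` in `Ω ∩ B_2` with Robin condition
`A Du · n = η u` on `∂Ω ∩ B_2`:
`∫_{Ω∩B_2} (A Du · Dψ + V u ψ) dx = ∫_{∂Ω∩B_2} η u ψ dσ` for all test functions `ψ`
compactly supported in `B_2`. -/
def IsWeakSolDom (d : ℕ) (Ω : Set (EucD d)) (A : EucD d → EucD d →L[ℝ] EucD d)
    (V η u : EucD d → ℝ) : Prop :=
  MemW12Dom d Ω u ∧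
    ∀ ψ : EucD d → ℝ, ContDiff ℝ (⊤ : ℕ∞) ψ → HasCompactSupport ψ →
      tsupport ψ ⊆ Metric.ball (0 : EucD d) 2 →
      ∫ x in Ω ∩ Metric.ball (0 : EucD d) 2,
          (⟪A x (gradient u x), gradient ψ x⟫ + V x * u x * ψ x)
        = ∫ x in frontier Ω ∩ Metric.ball (0 : EucD d) 2, η x * u x * ψ x ∂(surfD d)

/-- `A` is symmetric. -/
def IsSymmD (d : ℕ) (A : EucD d → EucD d →L[ℝ] EucD d) : Prop :=
  ∀ x v w, ⟪A x v, w⟫ = ⟪v, A x w⟫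

/-- Ellipticity: `λ I_d ≤ A ≤ λ⁻¹ I_d`. -/
def IsEllipticD (d : ℕ) (lam : ℝ) (A : EucD d → EucD d →L[ℝ] EucD d) : Prop :=
  ∀ x v, lam * ‖v‖ ^ 2 ≤ ⟪A x v, v⟫ ∧ ⟪A x v, v⟫ ≤ lam⁻¹ * ‖v‖ ^ 2

/-- `‖V‖_{W^{1,∞}} ≤ M`: bounded by `M` with Lipschitz constant `M`. -/
def W1InfD (d : ℕ) (V : EucD d → ℝ) (M : ℝ) : Prop :=
  (∀ x, |V x| ≤ M) ∧ LipschitzWith (Real.toNNReal M) V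

/-!
Multiplying local defining functions of `Ω` by bump functions and adding them up over a finite cover
of `closure Ω` gives a compactly supported `C^{1,1}` function `f` that is comparable to the distance
`δ` to the complement of `Ω`, with `Df ≠ 0` on the boundary. Here only signs matter: each summand is
nonnegative in `Ω`, vanishes on the boundary and increases at a definite rate into `Ω` near the
points where its bump function is `1`, so lower bounds survive the addition.

The regularized distance `ρ` is the mollification of `f` at a scale comparable to `δ`, neighbouring
dyadic scales being blended by cutoff functions. The mollifier is even, so affine functions are left
unchanged and `f` may be replaced near `x` by its remainder after the first order Taylor polynomial
at `x`, which is `O(δ x ^ 2)`. Hence `D^m (ρ - f)` for `m ≤ 1` and `D^m ρ` for `m ≥ 2` are both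
`O(δ ^ (2 - m))`. In particular `Dρ = Df` on the boundary, and `Dρ` is Lipschitz: on segments inside
`Ω` because `D²ρ` is bounded, and on segments leaving `Ω` by comparing with `Df` at a point outside.
-/

section LocallyC11

theorem exists_lipschitzWith_of_hasCompactSupport {X F : Type*} [PseudoMetricSpace X]
    [ProperSpace X] [NormedAddCommGroup F] {G : X → F} (hG : LocallyLipschitz G)
    (hs : HasCompactSupport G) : ∃ K, LipschitzWith K G := by
  obtain ⟨K, hK⟩ := (hG.locallyLipschitzOn
    (s := cthickening 1 (tsupport G))).exists_lipschitzOnWith_of_compact hs.isCompact.cthickening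
  obtain ⟨M, hM⟩ := hG.continuous.bounded_above_of_compact_support hs
  refine ⟨max K M.toNNReal, LipschitzWith.of_dist_le_mul fun y z => ?_⟩
  wlog hy : y ∈ tsupport G generalizing y z
  · by_cases hz : z ∈ tsupport G
    · rw [dist_comm, dist_comm y]
      exact this z y hz
    · simpa only [image_eq_zero_of_notMem_tsupport hy, image_eq_zero_of_notMem_tsupport hz,
        dist_self] using by positivity
  by_cases hz : z ∈ cthickening 1 (tsupport G)
  · calc dist (G y) (G z) ≤ K * dist y z := hK.dist_le_mul y (self_subset_cthickening _ hy) z hz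
      _ ≤ _ := by gcongr; exact le_max_left _ _
  · have hyz : 1 ≤ dist y z := by
      rw [dist_comm]
      exact le_of_not_ge fun h => hz (mem_cthickening_of_dist_le z y 1 _ hy h)
    have hGz : G z = 0 :=
      image_eq_zero_of_notMem_tsupport fun h => hz (self_subset_cthickening _ h)
    calc dist (G y) (G z) ≤ M.toNNReal * 1 := by
          rw [hGz, dist_zero_right, mul_one]
          exact (hM y).trans (Real.le_coe_toNNReal M)
      _ ≤ _ := by gcongr; exact le_max_right _ _

variable {E F : Type*} [NormedAddCommGroup E] [NormedSpace ℝ E]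
  [NormedAddCommGroup F] [NormedSpace ℝ F] {x : E}

/-- `f` is of class `C^{1,1}` near `x`: it is `C^1` at `x`, and its derivative is Lipschitz on a
neighbourhood of `x`. -/
def IsC11At (f : E → F) (x : E) : Prop :=
  ContDiffAt ℝ 1 f x ∧ ∃ K, ∃ t ∈ 𝓝 x, LipschitzOnWith K (fderiv ℝ f) t

theorem isC11At_of_contDiffAt {f : E → F} (hf : ContDiffAt ℝ 2 f x) : IsC11At f x :=
  ⟨hf.of_le one_le_two,
    (hf.fderiv_right (m := 1) (by norm_num)).exists_lipschitzOnWith⟩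

theorem isC11At_of_fderiv_eventuallyEq {f : E → F} {f' : E → E →L[ℝ] F} {K : NNReal} {t : Set E}
    (hf : ContDiffAt ℝ 1 f x) (hff' : fderiv ℝ f =ᶠ[𝓝 x] f') (ht : t ∈ 𝓝 x)
    (hK : LipschitzOnWith K f' t) : IsC11At f x := by
  refine ⟨hf, K, _, Filter.inter_mem ht hff', fun y hy z hz => ?_⟩
  rw [hy.2, hz.2]
  exact hK hy.1 hz.1

theorem IsC11At.congr {f g : E → F} (hf : IsC11At f x) (hfg : g =ᶠ[𝓝 x] f) : IsC11At g x := by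
  obtain ⟨hf₁, K, t, ht, hK⟩ := hf
  exact isC11At_of_fderiv_eventuallyEq (hf₁.congr_of_eventuallyEq hfg) hfg.fderiv ht hK

theorem IsC11At.eventually {f : E → F} (hf : IsC11At f x) : ∀ᶠ y in 𝓝 x, IsC11At f y := by
  obtain ⟨hf₁, K, t, ht, hK⟩ := hf
  filter_upwards [hf₁.eventually (by simp), eventually_mem_nhds_iff.2 ht] with y hy hty
  exact ⟨hy, K, t, hty, hK⟩

theorem IsC11At.add {f g : E → F} (hf : IsC11At f x) (hg : IsC11At g x) : IsC11At (f + g) x := by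
  obtain ⟨hf₁, K, t, ht, hfK⟩ := hf
  obtain ⟨hg₁, K', t', ht', hgK⟩ := hg
  refine isC11At_of_fderiv_eventuallyEq (hf₁.add hg₁) ?_ (Filter.inter_mem ht ht')
    ((hfK.mono Set.inter_subset_left).add (hgK.mono Set.inter_subset_right))
  filter_upwards [hf₁.eventually (by simp), hg₁.eventually (by simp)] with y hfy hgy
  exact fderiv_add (hfy.differentiableAt one_ne_zero) (hgy.differentiableAt one_ne_zero)

theorem IsC11At.smul {φ : E → ℝ} {f : E → F} (hφ : IsC11At φ x) (hf : IsC11At f x) :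
    IsC11At (φ • f) x := by
  obtain ⟨hφ₁, _, s', hs', hφ'⟩ := hφ
  obtain ⟨hf₁, _, t', ht', hf'⟩ := hf
  obtain ⟨_, s, hs, hφ⟩ := hφ₁.exists_lipschitzOnWith
  obtain ⟨_, t, ht, hf⟩ := hf₁.exists_lipschitzOnWith
  let leibniz : (ℝ × F) × (E →L[ℝ] ℝ) × (E →L[ℝ] F) → E →L[ℝ] F :=
    fun p => p.1.1 • p.2.2 + p.2.1.smulRight p.1.2
  let jet : E → (ℝ × F) × (E →L[ℝ] ℝ) × (E →L[ℝ] F) :=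
    fun y => ((φ y, f y), fderiv ℝ φ y, fderiv ℝ f y)
  have hjet : LipschitzOnWith _ jet (s ∩ t ∩ (s' ∩ t')) :=
    ((hφ.mono fun _ h => h.1.1).prodMk (hf.mono fun _ h => h.1.2)).prodMk
      ((hφ'.mono fun _ h => h.2.1).prodMk (hf'.mono fun _ h => h.2.2))
  have hnhds : s ∩ t ∩ (s' ∩ t') ∈ 𝓝 x :=
    Filter.inter_mem (Filter.inter_mem hs ht) (Filter.inter_mem hs' ht')
  have hleibniz : ContDiff ℝ 1 leibniz := by fun_prop
  obtain ⟨K, u, hu, hK⟩ := hleibniz.contDiffAt.exists_lipschitzOnWith (x := jet x)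
  refine isC11At_of_fderiv_eventuallyEq (hφ₁.smul hf₁) ?_
    (Filter.inter_mem hnhds (hjet.continuousOn.continuousAt hnhds hu))
    (hK.comp (hjet.mono Set.inter_subset_left) fun _ h => h.2)
  filter_upwards [hφ₁.eventually (by simp), hf₁.eventually (by simp)] with y hφy hfy
  exact fderiv_smul (hφy.differentiableAt one_ne_zero) (hfy.differentiableAt one_ne_zero)

theorem exists_lipschitzWith_fderiv [ProperSpace E] {f : E → F} (hf : ∀ x, IsC11At f x)
    (hs : HasCompactSupport f) : ∃ L, LipschitzWith L (fderiv ℝ f) :=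
  exists_lipschitzWith_of_hasCompactSupport (fun x => (hf x).2) (hs.fderiv (𝕜 := ℝ))

end LocallyC11

section DefiningFunction

variable {E : Type*} [NormedAddCommGroup E] [NormedSpace ℝ E] {Ω : Set E}

/-- `Ω` has a `C^{1,1}` boundary: near each of its boundary points it is the positivity set of a
`C^{1,1}` function with nonzero derivative. In particular `Ω` is open. -/
def HasC11Boundary (Ω : Set E) : Prop :=
  ∀ x ∈ frontier Ω, ∃ g : E → ℝ, IsC11At g x ∧ fderiv ℝ g x ≠ 0 ∧ ∀ᶠ y in 𝓝 x, y ∈ Ω ↔ 0 < g y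

theorem IsC11Domain.hasC11Boundary {d : ℕ} {K : ℝ} {Ω : Set (EucD d)} (hΩ : IsC11Domain d Ω K) :
    HasC11Boundary Ω := by
  obtain ⟨-, -, -, hK, hloc⟩ := hΩ
  intro x hx
  obtain ⟨ρ, r, hr, hρ, hLip, hgrad, hmem, -⟩ := hloc x hx
  have hgrad_x : fderiv ℝ ρ x ≠ 0 :=
    norm_pos_iff.1 ((inv_pos.2 hK).trans_le (hgrad x (mem_ball_self hr)))
  have hneg : fderiv ℝ (-ρ) = -fderiv ℝ ρ := funext fun _ => fderiv_neg
  refine ⟨-ρ, ⟨hρ.neg.contDiffAt, _, _, Filter.univ_mem, hneg ▸ hLip.neg.lipschitzOnWith⟩, ?_, ?_⟩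
  · rwa [hneg, Pi.neg_apply, neg_ne_zero]
  · filter_upwards [ball_mem_nhds x hr] with y hy
    have := Set.ext_iff.1 hmem y
    simpa [hy] using this

theorem HasC11Boundary.isOpen (hΩ : HasC11Boundary Ω) : IsOpen Ω := by
  refine isOpen_iff_mem_nhds.2 fun x hx => ?_
  by_cases hfr : x ∈ frontier Ω
  · obtain ⟨g, hg, -, hgΩ⟩ := hΩ x hfr
    have hpos : ∀ᶠ y in 𝓝 x, 0 < g y :=
      hg.1.continuousAt.eventually_const_lt (hgΩ.self_of_nhds.1 hx)
    filter_upwards [hgΩ, hpos] with y hy hy0 using hy.2 hy0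
  · exact mem_interior_iff_mem_nhds.1 (by_contra fun h => hfr ⟨subset_closure hx, h⟩)

theorem eq_zero_of_mem_frontier_of_eventually_mem_iff_pos {X : Type*} [TopologicalSpace X]
    {s : Set X} {g : X → ℝ} {x : X} (hx : x ∈ frontier s) (hg : ContinuousAt g x)
    (hs : ∀ᶠ y in 𝓝 x, y ∈ s ↔ 0 < g y) : g x = 0 := by
  refine le_antisymm (not_lt.1 fun hpos => ?_) (not_lt.1 fun hneg => ?_)
  · refine hx.2 (mem_interior_iff_mem_nhds.2 ?_)
    filter_upwards [hs, hg.eventually_const_lt hpos] with y hy hy0 using hy.2 hy0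
  · obtain ⟨y, hys, hy, hy0⟩ := ((mem_closure_iff_frequently.1 hx.1).and_eventually
      (hs.and (hg.eventually_lt_const hneg))).exists
    exact (hy.1 hys).not_gt hy0

theorem exists_ascent_direction {g : E → ℝ} {x : E} (hg : ContDiffAt ℝ 1 g x)
    (hgx : fderiv ℝ g x ≠ 0) :
    ∃ v, ∃ U ∈ 𝓝 x, ∀ y ∈ U, ∀ t : ℝ, 0 ≤ t → y + t • v ∈ U → g y + t ≤ g (y + t • v) := by
  obtain ⟨v, hv⟩ : ∃ v, fderiv ℝ g x v = 2 := by
    obtain ⟨w, hw⟩ := DFunLike.ne_iff.1 hgx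
    exact ⟨(2 / fderiv ℝ g x w) • w, by simp [div_mul_cancel₀ _ hw]⟩
  obtain ⟨U, hU, hlin⟩ := (hg.hasStrictFDerivAt one_ne_zero).approximates_deriv_on_nhds
    (c := (‖v‖₊ + 1)⁻¹) (Or.inr (by positivity))
  refine ⟨v, U, hU, fun y hy t ht hyt => ?_⟩
  have hstep : |g (y + t • v) - g y - t * 2| ≤ t * ((‖v‖ + 1)⁻¹ * ‖v‖) := by
    have := hlin (y + t • v) hyt y hy
    rw [add_sub_cancel_left, map_smul, hv, norm_smul, Real.norm_of_nonneg ht] at this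
    simpa [mul_left_comm] using this
  have hle : (‖v‖ + 1)⁻¹ * ‖v‖ ≤ 1 := by
    rw [inv_mul_le_one₀ (by positivity)]
    linarith
  linarith [neg_le_of_abs_le hstep, mul_le_of_le_one_right ht hle]

/-- The conditions that a function positive in `Ω` must satisfy at `y ∈ closure Ω` to vanish
exactly to first order on the boundary: it dominates `c` times the distance to the complement, and
on the boundary it vanishes and grows at rate `c` along some direction pointing into `Ω`. -/
def DefinesAt (Ω : Set E) (c : ℝ) (g : E → ℝ) (y : E) : Prop :=
  (y ∈ Ω → c * infDist y Ωᶜ ≤ g y) ∧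
    (y ∈ frontier Ω → g y = 0 ∧ ∃ v, ∀ᶠ t in 𝓝[>] (0 : ℝ), y + t • v ∈ Ω ∧ c * t ≤ g (y + t • v))

theorem tendsto_add_smul_nhdsGT_zero (y v : E) :
    Filter.Tendsto (fun t : ℝ => y + t • v) (𝓝[>] 0) (𝓝 y) :=
  (Continuous.tendsto' (by fun_prop) 0 y (by simp)).mono_left nhdsWithin_le_nhds

theorem DefinesAt.congr {c : ℝ} {f g : E → ℝ} {y : E} (hf : DefinesAt Ω c f y)
    (hfg : g =ᶠ[𝓝 y] f) : DefinesAt Ω c g y := by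
  refine ⟨fun hy => hfg.self_of_nhds ▸ hf.1 hy, fun hy => ?_⟩
  obtain ⟨hfy, v, hv⟩ := hf.2 hy
  refine ⟨hfg.self_of_nhds.trans hfy, v, ?_⟩
  filter_upwards [hv, (tendsto_add_smul_nhdsGT_zero y v).eventually hfg] with t ht htg
  exact ⟨ht.1, htg ▸ ht.2⟩

theorem DefinesAt.mono {c c' : ℝ} {f g : E → ℝ} {y : E} (hf : DefinesAt Ω c f y)
    (hc : c' ≤ c) (hfg : ∀ z ∈ Ω, f z ≤ g z) (hg : y ∈ frontier Ω → g y = 0) :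
    DefinesAt Ω c' g y := by
  refine ⟨fun hy => ?_, fun hy => ⟨hg hy, ?_⟩⟩
  · calc c' * infDist y Ωᶜ ≤ c * infDist y Ωᶜ := by gcongr; exact infDist_nonneg
      _ ≤ f y := hf.1 hy
      _ ≤ g y := hfg y hy
  · obtain ⟨-, v, hv⟩ := hf.2 hy
    refine ⟨v, ?_⟩
    filter_upwards [hv, self_mem_nhdsWithin] with t ht ht0
    refine ⟨ht.1, ?_⟩
    calc c' * t ≤ c * t := by gcongr; exact (Set.mem_Ioi.1 ht0).le
      _ ≤ f (y + t • v) := ht.2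
      _ ≤ g (y + t • v) := hfg _ ht.1

theorem DefinesAt.fderiv_ne_zero {c : ℝ} {f : E → ℝ} {y : E} (hf : DefinesAt Ω c f y) (hc : 0 < c)
    (hy : y ∈ frontier Ω) (hfd : DifferentiableAt ℝ f y) : fderiv ℝ f y ≠ 0 := by
  obtain ⟨hfy, v, hv⟩ := hf.2 hy
  have hslope := (hfd.hasFDerivAt.hasLineDerivAt v).tendsto_slope_zero_right
  have hle : c ≤ fderiv ℝ f y v := by
    refine ge_of_tendsto hslope ?_
    filter_upwards [hv, self_mem_nhdsWithin] with t ht (ht0 : 0 < t)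
    rw [hfy, sub_zero, smul_eq_mul, inv_mul_eq_div, le_div_iff₀ ht0]
    exact ht.2
  intro h
  simp only [h, zero_apply] at hle
  exact hc.not_ge hle

theorem eventually_definesAt_one (hΩ : IsOpen Ω) {x : E} (hx : x ∈ Ω) :
    ∀ᶠ y in 𝓝 x, DefinesAt Ω (infDist x Ωᶜ + 1)⁻¹ 1 y := by
  have hlt : ∀ᶠ y in 𝓝 x, infDist y Ωᶜ < infDist x Ωᶜ + 1 :=
    (continuous_infDist_pt _).continuousAt.eventually_lt_const (by linarith)
  filter_upwards [hΩ.mem_nhds hx, hlt] with y hy hylt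
  refine ⟨fun _ => ?_, fun hfr => absurd hy (hΩ.frontier_eq ▸ hfr).2⟩
  exact (inv_mul_le_one₀ (infDist_nonneg.trans_lt (lt_add_one _))).2 hylt.le

theorem eventually_infDist_le_mul {g : E → ℝ} {x v : E} {U : Set E} (hU : U ∈ 𝓝 x)
    (hg : ContinuousAt g x) (hgx : g x = 0) (hgΩ : ∀ᶠ y in 𝓝 x, y ∈ Ω ↔ 0 < g y)
    (hasc : ∀ y ∈ U, ∀ t : ℝ, 0 ≤ t → y + t • v ∈ U → g y + t ≤ g (y + t • v)) :
    ∀ᶠ y in 𝓝 x, y ∈ Ω → infDist y Ωᶜ ≤ ‖v‖ * g y := by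
  have htends : Filter.Tendsto (fun y => y - g y • v) (𝓝 x) (𝓝 x) := by
    simpa [hgx] using Filter.tendsto_id.sub (hg.tendsto.smul_const v)
  filter_upwards [hgΩ, hU, htends.eventually hgΩ, htends hU] with y hyΩ hyU hzΩ hzU hy
  have hgy : 0 < g y := hyΩ.1 hy
  have hz : y - g y • v ∈ Ωᶜ := fun h => by
    have := hasc _ hzU (g y) hgy.le (by simpa using hyU)
    rw [sub_add_cancel] at this
    linarith [hzΩ.1 h]
  calc infDist y Ωᶜ ≤ dist y (y - g y • v) := infDist_le_dist_of_mem hz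
    _ = ‖v‖ * g y := by
      rw [dist_eq_norm, sub_sub_cancel, norm_smul, Real.norm_of_nonneg hgy.le, mul_comm]

theorem eventually_definesAt_of_mem_frontier {g : E → ℝ} {x : E} (hx : x ∈ frontier Ω)
    (hg : ContDiffAt ℝ 1 g x) (hg' : fderiv ℝ g x ≠ 0) (hgΩ : ∀ᶠ y in 𝓝 x, y ∈ Ω ↔ 0 < g y) :
    ∃ c > 0, ∀ᶠ y in 𝓝 x, DefinesAt Ω c g y := by
  obtain ⟨v, U, hU, hasc⟩ := exists_ascent_direction hg hg'
  have hgx := eq_zero_of_mem_frontier_of_eventually_mem_iff_pos hx hg.continuousAt hgΩ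
  refine ⟨(‖v‖ + 1)⁻¹, by positivity, ?_⟩
  filter_upwards [eventually_infDist_le_mul hU hg.continuousAt hgx hgΩ hasc, hgΩ,
    hgΩ.eventually_nhds, eventually_mem_nhds_iff.2 hU, hg.eventually (by simp)]
    with y hdist hyΩ hyΩ' hyU hgy
  refine ⟨fun hy => ?_, fun hy => ?_⟩
  · rw [inv_mul_le_iff₀ (by positivity)]
    linarith [hdist hy, hyΩ.1 hy]
  · have hgy0 := eq_zero_of_mem_frontier_of_eventually_mem_iff_pos hy hgy.continuousAt hyΩ'
    refine ⟨hgy0, v, ?_⟩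
    have htends := tendsto_add_smul_nhdsGT_zero y v
    filter_upwards [self_mem_nhdsWithin, htends hyU, htends.eventually hyΩ'] with t ht htU htΩ
    have ht0 : 0 < t := ht
    have hgrow : t ≤ g (y + t • v) := by
      simpa [hgy0] using hasc y (mem_of_mem_nhds hyU) t ht0.le htU
    refine ⟨htΩ.2 (ht0.trans_le hgrow), (mul_le_of_le_one_left ht0.le ?_).trans hgrow⟩
    exact inv_le_one_of_one_le₀ (by linarith [norm_nonneg v])

/-- `f` is a compactly supported `C^{1,1}` function that is nonnegative in `Ω`, vanishes on the
boundary, and is a defining function of `Ω` at the points of `S`, uniformly. -/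
structure IsDefiningOn (Ω S : Set E) (f : E → ℝ) : Prop where
  isC11At : ∀ x, IsC11At f x
  hasCompactSupport : HasCompactSupport f
  nonneg : ∀ y ∈ Ω, 0 ≤ f y
  eq_zero : ∀ y ∈ frontier Ω, f y = 0
  exists_definesAt : ∃ c > 0, ∀ y ∈ S, DefinesAt Ω c f y

theorem isDefiningOn_empty : IsDefiningOn Ω ∅ 0 where
  isC11At _ := isC11At_of_contDiffAt contDiff_zero_fun.contDiffAt
  hasCompactSupport := HasCompactSupport.zero
  nonneg _ _ := le_rfl
  eq_zero _ _ := rfl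
  exists_definesAt := ⟨1, one_pos, fun _ h => h.elim⟩

theorem IsDefiningOn.mono {S T : Set E} {f : E → ℝ} (hf : IsDefiningOn Ω T f) (hST : S ⊆ T) :
    IsDefiningOn Ω S f :=
  let ⟨c, hc, h⟩ := hf.exists_definesAt
  { hf with exists_definesAt := ⟨c, hc, fun y hy => h y (hST hy)⟩ }

theorem IsDefiningOn.union {S T : Set E} {f g : E → ℝ} (hf : IsDefiningOn Ω S f)
    (hg : IsDefiningOn Ω T g) : IsDefiningOn Ω (S ∪ T) (f + g) := by
  obtain ⟨c, hc, hcf⟩ := hf.exists_definesAt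
  obtain ⟨c', hc', hcg⟩ := hg.exists_definesAt
  have hzero : ∀ y ∈ frontier Ω, (f + g) y = 0 := fun y hy => by
    rw [Pi.add_apply, hf.eq_zero y hy, hg.eq_zero y hy, add_zero]
  refine ⟨fun x => (hf.isC11At x).add (hg.isC11At x), hf.hasCompactSupport.add hg.hasCompactSupport,
    fun y hy => add_nonneg (hf.nonneg y hy) (hg.nonneg y hy), hzero, min c c', lt_min hc hc', ?_⟩
  rintro y (hy | hy)
  · exact (hcf y hy).mono (min_le_left _ _) (fun z hz => le_add_of_nonneg_right (hg.nonneg z hz))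
      (hzero y)
  · exact (hcg y hy).mono (min_le_right _ _) (fun z hz => le_add_of_nonneg_left (hf.nonneg z hz))
      (hzero y)

theorem isDefiningOn_smul {φ g : E → ℝ} {c : ℝ} (hφ : ContDiff ℝ 2 φ) (hφs : HasCompactSupport φ)
    (hφ0 : ∀ y, 0 ≤ φ y) (hc : 0 < c) (hg : ∀ y ∈ tsupport φ, IsC11At g y ∧ DefinesAt Ω c g y) :
    IsDefiningOn Ω {y | φ =ᶠ[𝓝 y] 1} (φ • g) where
  isC11At y := by
    by_cases hy : y ∈ tsupport φ
    · exact (isC11At_of_contDiffAt hφ.contDiffAt).smul (hg y hy).1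
    · refine (isC11At_of_contDiffAt (contDiffAt_const (c := 0))).congr ?_
      filter_upwards [(isClosed_tsupport φ).isOpen_compl.mem_nhds hy] with z hz
      simp [image_eq_zero_of_notMem_tsupport hz]
  hasCompactSupport := hφs.smul_right
  nonneg y hy := by
    by_cases hys : y ∈ tsupport φ
    · exact mul_nonneg (hφ0 y) ((mul_nonneg hc.le infDist_nonneg).trans ((hg y hys).2.1 hy))
    · simp [image_eq_zero_of_notMem_tsupport hys]
  eq_zero y hy := by
    by_cases hys : y ∈ tsupport φ
    · simp [((hg y hys).2.2 hy).1]
    · simp [image_eq_zero_of_notMem_tsupport hys]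
  exists_definesAt := by
    refine ⟨c, hc, fun y (hy : φ =ᶠ[𝓝 y] 1) => ?_⟩
    have hys : y ∈ tsupport φ := subset_tsupport φ (by simp [hy.self_of_nhds])
    refine (hg y hys).2.congr ?_
    filter_upwards [hy] with z hz
    simp [hz]

variable [FiniteDimensional ℝ E]

theorem exists_isDefiningOn_nhds {g : E → ℝ} {x : E} {c : ℝ} (hg : IsC11At g x) (hc : 0 < c)
    (hgc : ∀ᶠ y in 𝓝 x, DefinesAt Ω c g y) : ∃ t ∈ 𝓝 x, ∃ f, IsDefiningOn Ω t f := by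
  obtain ⟨r, hr, hball⟩ := nhds_basis_closedBall.eventually_iff.1 (hg.eventually.and hgc)
  let φ : ContDiffBump x := ⟨r / 2, r, half_pos hr, half_lt_self hr⟩
  exact ⟨_, φ.eventuallyEq_one.eventually_nhds, _, isDefiningOn_smul φ.contDiff φ.hasCompactSupport
    (fun _ => φ.nonneg) hc fun y hy => hball (φ.tsupport_eq ▸ hy)⟩

theorem HasC11Boundary.exists_isDefiningOn (hΩ : HasC11Boundary Ω) (hb : Bornology.IsBounded Ω) :
    ∃ f, IsDefiningOn Ω (closure Ω) f := by
  refine hb.isCompact_closure.induction_on (p := fun S => ∃ f, IsDefiningOn Ω S f)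
    ⟨0, isDefiningOn_empty⟩ (fun s t hst ⟨f, hf⟩ => ⟨f, hf.mono hst⟩)
    (fun s t ⟨f, hf⟩ ⟨g, hg⟩ => ⟨f + g, hf.union hg⟩) fun x hx => ?_
  suffices h : ∃ t ∈ 𝓝 x, ∃ f, IsDefiningOn Ω t f from
    let ⟨t, ht, hf⟩ := h; ⟨t, mem_nhdsWithin_of_mem_nhds ht, hf⟩
  by_cases hxΩ : x ∈ Ω
  · exact exists_isDefiningOn_nhds (isC11At_of_contDiffAt contDiff_const.contDiffAt)
      (inv_pos.2 (infDist_nonneg.trans_lt (lt_add_one _))) (eventually_definesAt_one hΩ.isOpen hxΩ)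
  · have hfr : x ∈ frontier Ω := hΩ.isOpen.frontier_eq ▸ ⟨hx, hxΩ⟩
    obtain ⟨g, hg, hg', hgΩ⟩ := hΩ x hfr
    obtain ⟨c, hc, hgc⟩ := eventually_definesAt_of_mem_frontier hfr hg.1 hg' hgΩ
    exact exists_isDefiningOn_nhds hg hc hgc

theorem infDist_frontier_eq_infDist_compl {x : E} (hx : x ∈ Ω) (hΩ : Ω ≠ Set.univ) :
    infDist x (frontier Ω) = infDist x Ωᶜ := by
  obtain ⟨z, hz, hxz⟩ := exists_mem_frontier_infDist_compl_eq_dist hx hΩ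
  refine le_antisymm (hxz ▸ infDist_le_dist_of_mem hz) ?_
  have hsub : frontier Ω ⊆ closure Ωᶜ := frontier_compl Ω ▸ frontier_subset_closure
  rw [← infDist_closure (s := Ωᶜ)]
  exact infDist_le_infDist_of_subset hsub ⟨z, hz⟩

theorem le_mul_infDist_compl {f : E → ℝ} {C : NNReal} (hf : LipschitzWith C f)
    (hf0 : ∀ y ∈ frontier Ω, f y = 0) (hΩ : Ω ≠ Set.univ) {x : E} (hx : x ∈ Ω) :
    f x ≤ C * infDist x Ωᶜ := by
  obtain ⟨z, hz, hxz⟩ := exists_mem_frontier_infDist_compl_eq_dist hx hΩ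
  calc f x ≤ dist (f x) (f z) := by rw [hf0 z hz, dist_zero_right]; exact le_norm_self _
    _ ≤ C * infDist x Ωᶜ := hxz ▸ hf.dist_le_mul x z

end DefiningFunction

section ScaledBounds

variable {E F : Type*} [NormedAddCommGroup E] [NormedSpace ℝ E]
  [NormedAddCommGroup F] [NormedSpace ℝ F] {A B : ℕ → ℝ} {s M N : ℝ} {x : E}

/-- The scale-invariant derivative estimates `|D^m u(x)| ≤ A m * M / s^m` for all `m`, satisfied by
a function of size `M` that is smooth at scale `s`. -/
def HasScaledBound (A : ℕ → ℝ) (s M : ℝ) (u : E → F) (x : E) : Prop :=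
  ∀ m, ‖iteratedFDeriv ℝ m u x‖ * s ^ m ≤ A m * M

/-- The constants in the derivative estimates of a product, by the Leibniz rule. -/
def leibnizConst (A B : ℕ → ℝ) (m : ℕ) : ℝ :=
  ∑ i ∈ Finset.range (m + 1), m.choose i * A i * B (m - i)

theorem HasScaledBound.congr {u v : E → F} (hu : HasScaledBound A s M u x) (h : v =ᶠ[𝓝 x] u) :
    HasScaledBound A s M v x := fun m => by
  rw [(h.iteratedFDeriv ℝ m).self_of_nhds]
  exact hu m

theorem HasScaledBound.add {u v : E → F} (hu : HasScaledBound A s M u x)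
    (hv : HasScaledBound B s M v x) (hs : 0 ≤ s) (hus : ContDiff ℝ (⊤ : ℕ∞) u)
    (hvs : ContDiff ℝ (⊤ : ℕ∞) v) : HasScaledBound (A + B) s M (u + v) x := fun m => by
  rw [iteratedFDeriv_add_apply (hus.of_le (mod_cast le_top)).contDiffAt
    (hvs.of_le (mod_cast le_top)).contDiffAt, Pi.add_apply, add_mul]
  calc _ ≤ (‖iteratedFDeriv ℝ m u x‖ + ‖iteratedFDeriv ℝ m v x‖) * s ^ m := by
        gcongr
        exact norm_add_le _ _
    _ ≤ A m * M + B m * M := by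
        rw [add_mul]
        exact add_le_add (hu m) (hv m)

theorem HasScaledBound.neg {u : E → F} (hu : HasScaledBound A s M u x) :
    HasScaledBound A s M (-u) x := fun m => by
  rw [iteratedFDeriv_neg_apply, norm_neg]
  exact hu m

theorem HasScaledBound.smul {φ : E → ℝ} {u : E → F} (hφ : HasScaledBound A s M φ x)
    (hu : HasScaledBound B s N u x) (hs : 0 ≤ s) (hφs : ContDiff ℝ (⊤ : ℕ∞) φ)
    (hus : ContDiff ℝ (⊤ : ℕ∞) u) :
    HasScaledBound (leibnizConst A B) s (M * N) (φ • u) x := fun m => by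
  calc ‖iteratedFDeriv ℝ m (φ • u) x‖ * s ^ m
      ≤ (∑ i ∈ Finset.range (m + 1), (m.choose i : ℝ) * ‖iteratedFDeriv ℝ i φ x‖ *
          ‖iteratedFDeriv ℝ (m - i) u x‖) * s ^ m := by
        gcongr
        exact norm_iteratedFDeriv_smul_le hφs hus x (mod_cast le_top)
    _ = ∑ i ∈ Finset.range (m + 1), (m.choose i : ℝ) * (‖iteratedFDeriv ℝ i φ x‖ * s ^ i) *
          (‖iteratedFDeriv ℝ (m - i) u x‖ * s ^ (m - i)) := by
        rw [Finset.sum_mul]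
        refine Finset.sum_congr rfl fun i hi => ?_
        rw [← pow_mul_pow_sub s (Finset.mem_range_succ_iff.1 hi)]
        ring
    _ ≤ ∑ i ∈ Finset.range (m + 1), (m.choose i : ℝ) * (A i * M) * (B (m - i) * N) := by
        refine Finset.sum_le_sum fun i _ => ?_
        have hA : 0 ≤ A i * M := (by positivity : (0 : ℝ) ≤ _).trans (hφ i)
        exact mul_le_mul (mul_le_mul_of_nonneg_left (hφ i) (by positivity)) (hu (m - i))
          (by positivity) (by positivity)
    _ = leibnizConst A B m * (M * N) := by
        rw [leibnizConst, Finset.sum_mul]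
        exact Finset.sum_congr rfl fun i _ => by ring

theorem HasScaledBound.mono_scale {u : E → F} {c t : ℝ} (hu : HasScaledBound A s M u x)
    (ht : 0 ≤ t) (hc : 0 ≤ c) (hts : t ≤ c * s) : HasScaledBound (fun m => c ^ m * A m) t M u x :=
  fun m => by
  calc ‖iteratedFDeriv ℝ m u x‖ * t ^ m ≤ ‖iteratedFDeriv ℝ m u x‖ * (c * s) ^ m := by gcongr
    _ = c ^ m * (‖iteratedFDeriv ℝ m u x‖ * s ^ m) := by ring
    _ ≤ c ^ m * (A m * M) := mul_le_mul_of_nonneg_left (hu m) (by positivity)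
    _ = c ^ m * A m * M := (mul_assoc _ _ _).symm

end ScaledBounds

section Mollification

open scoped Convolution

variable {E : Type*} [NormedAddCommGroup E] [NormedSpace ℝ E] [FiniteDimensional ℝ E]
  [MeasurableSpace E] (μ : Measure E)

/-- A fixed smooth even probability density supported in the closed unit ball. -/
def mollifier : E → ℝ :=
  (⟨1 / 2, 1, by norm_num, by norm_num⟩ : ContDiffBump (0 : E)).normed μ

/-- The mollification of `f` at scale `ε`: the average of `f` over the ball of radius `ε`, weighted
by the rescaled `mollifier`. -/
def mollify (ε : ℝ) (f : E → ℝ) (x : E) : ℝ :=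
  ∫ z, mollifier μ z * f (x - ε • z) ∂μ

/-- The constants in the bounds `‖D^m (mollify ε f)‖ ≤ mollifierConst m * ε ^ (-m) * ‖f‖_∞`. -/
def mollifierConst (m : ℕ) : ℝ :=
  ∫ z, ‖iteratedFDeriv ℝ m (mollifier μ) z‖ ∂μ

theorem contDiff_mollifier : ContDiff ℝ (⊤ : ℕ∞) (mollifier μ) :=
  ContDiffBump.contDiff_normed _

theorem mollify_eq_convolution {ε : ℝ} (hε : ε ≠ 0) (f : E → ℝ) :
    mollify μ ε f = fun x => (mollifier μ ⋆[(ContinuousLinearMap.lsmul ℝ ℝ).flip, μ]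
      fun y => f (ε • y)) (ε⁻¹ • x) := by
  funext x
  refine integral_congr_ae (.of_forall fun z => ?_)
  simp [smul_sub, smul_inv_smul₀ hε, mul_comm]

theorem sub_smul_mem_closedBall {V : Type*} [SeminormedAddCommGroup V] [NormedSpace ℝ V] (x : V)
    {z : V} {ε : ℝ} (hε : 0 ≤ ε) (hz : ‖z‖ ≤ 1) : x - ε • z ∈ closedBall x ε := by
  rw [mem_closedBall, dist_eq_norm, sub_sub_cancel_left, norm_neg, norm_smul,
    Real.norm_of_nonneg hε]
  exact mul_le_of_le_one_right hε hz

variable [BorelSpace E] [μ.IsAddHaarMeasure]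

theorem tsupport_mollifier : tsupport (mollifier μ) = closedBall 0 1 :=
  ContDiffBump.tsupport_normed_eq _

theorem hasCompactSupport_mollifier : HasCompactSupport (mollifier μ) :=
  ContDiffBump.hasCompactSupport_normed _

theorem fderiv_convolution_lsmul_flip {F : Type*} [NormedAddCommGroup F] [NormedSpace ℝ F]
    {g : E → F} {h : E → ℝ} (hg : ContDiff ℝ 1 g) (hgs : HasCompactSupport g)
    (hh : LocallyIntegrable h μ) :
    fderiv ℝ (g ⋆[(ContinuousLinearMap.lsmul ℝ ℝ).flip, μ] h) =
      fderiv ℝ g ⋆[(ContinuousLinearMap.lsmul ℝ ℝ).flip, μ] h :=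
  funext fun x => (hgs.hasFDerivAt_convolution_left _ hg hh x).fderiv

theorem iteratedFDeriv_convolution_lsmul_flip {F : Type*} [NormedAddCommGroup F] [NormedSpace ℝ F]
    {g : E → F} {h : E → ℝ} (hg : ContDiff ℝ (⊤ : ℕ∞) g) (hgs : HasCompactSupport g)
    (hh : LocallyIntegrable h μ) (m : ℕ) :
    iteratedFDeriv ℝ m (g ⋆[(ContinuousLinearMap.lsmul ℝ ℝ).flip, μ] h) =
      iteratedFDeriv ℝ m g ⋆[(ContinuousLinearMap.lsmul ℝ ℝ).flip, μ] h := by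
  induction m with
  | zero =>
    let curry : F ≃L[ℝ] E [×0]→L[ℝ] F :=
      (continuousMultilinearCurryFin0 ℝ E F).symm.toContinuousLinearEquiv
    exact funext fun x => (curry.integral_comp_comm fun t => h (x - t) • g t).symm
  | succ m ih =>
    let curry : (E →L[ℝ] E [×m]→L[ℝ] F) ≃L[ℝ] E [×m + 1]→L[ℝ] F :=
      (continuousMultilinearCurryLeftEquiv ℝ (fun _ => E) F).symm.toContinuousLinearEquiv
    rw [iteratedFDeriv_succ_eq_comp_left, ih, fderiv_convolution_lsmul_flip μ
      (hg.iteratedFDeriv_right (m := 1) (mod_cast le_top)) (hgs.iteratedFDeriv m) hh]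
    funext x
    exact (ContinuousLinearEquiv.integral_comp_comm (𝕜 := ℝ) curry (μ := μ)
      fun t => h (x - t) • fderiv ℝ (iteratedFDeriv ℝ m g) t).symm

theorem contDiff_mollify {ε : ℝ} (hε : ε ≠ 0) {f : E → ℝ} (hf : Continuous f) :
    ContDiff ℝ (⊤ : ℕ∞) (mollify μ ε f) := by
  rw [mollify_eq_convolution μ hε]
  exact ((hasCompactSupport_mollifier μ).contDiff_convolution_left _ (contDiff_mollifier μ)
    (hf.comp (continuous_const_smul ε)).locallyIntegrable).comp (contDiff_const_smul _)

theorem hasScaledBound_mollify {ε M : ℝ} (hε : 0 < ε) {f : E → ℝ} (hf : Continuous f) {x : E}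
    (hM : ∀ y ∈ closedBall x ε, |f y| ≤ M) :
    HasScaledBound (mollifierConst μ) ε M (mollify μ ε f) x := fun m => by
  have hloc : LocallyIntegrable (fun y => f (ε • y)) μ :=
    (hf.comp (continuous_const_smul ε)).locallyIntegrable
  have hderiv := iteratedFDeriv_convolution_lsmul_flip μ (contDiff_mollifier μ)
    (hasCompactSupport_mollifier μ) hloc m
  have hle : ∀ z, ‖f (ε • (ε⁻¹ • x - z)) • iteratedFDeriv ℝ m (mollifier μ) z‖ ≤
      ‖iteratedFDeriv ℝ m (mollifier μ) z‖ * M := fun z => by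
    rw [norm_smul, mul_comm]
    by_cases hz : z ∈ tsupport (mollifier μ)
    · rw [tsupport_mollifier, mem_closedBall_zero_iff] at hz
      rw [smul_sub, smul_inv_smul₀ hε.ne']
      gcongr
      exact hM _ (sub_smul_mem_closedBall x hε.le hz)
    · have : iteratedFDeriv ℝ m (mollifier μ) z = 0 :=
        Function.notMem_support.1 fun h => hz (support_iteratedFDeriv_subset m h)
      simp [this]
  have hsmooth := (hasCompactSupport_mollifier μ).contDiff_convolution_left
    (ContinuousLinearMap.lsmul ℝ ℝ).flip (contDiff_mollifier μ) hloc
  rw [mollify_eq_convolution μ hε.ne', iteratedFDeriv_comp_const_smul _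
    (hsmooth.of_le (mod_cast le_top)), hderiv, norm_smul, norm_pow, norm_inv,
    Real.norm_of_nonneg hε.le, mul_right_comm, ← mul_pow, inv_mul_cancel₀ hε.ne', one_pow, one_mul,
    mollifierConst, ← integral_mul_const]
  refine norm_integral_le_of_norm_le (Integrable.mul_const ?_ M) (.of_forall hle)
  exact (((contDiff_mollifier μ).continuous_iteratedFDeriv (mod_cast le_top)).norm
    ).integrable_of_hasCompactSupport ((hasCompactSupport_mollifier μ).iteratedFDeriv m).norm

theorem integrable_mollifier_mul {h : E → ℝ} (hh : Continuous h) :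
    Integrable (fun z => mollifier μ z * h z) μ :=
  ((contDiff_mollifier μ).continuous.mul hh).integrable_of_hasCompactSupport
    (hasCompactSupport_mollifier μ).mul_right

theorem mollify_mono {ε : ℝ} (hε : 0 ≤ ε) {f g : E → ℝ} (hf : Continuous f) (hg : Continuous g)
    {x : E} (hfg : ∀ y ∈ closedBall x ε, f y ≤ g y) : mollify μ ε f x ≤ mollify μ ε g x := by
  refine integral_mono (integrable_mollifier_mul μ (by fun_prop))
    (integrable_mollifier_mul μ (by fun_prop)) fun z => ?_
  by_cases hz : z ∈ tsupport (mollifier μ)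
  · rw [tsupport_mollifier, mem_closedBall_zero_iff] at hz
    exact mul_le_mul_of_nonneg_left (hfg _ (sub_smul_mem_closedBall x hε hz))
      (ContDiffBump.nonneg_normed _ _)
  · simp [image_eq_zero_of_notMem_tsupport hz]

theorem mollify_sub {ε : ℝ} {f g : E → ℝ} (hf : Continuous f) (hg : Continuous g) :
    mollify μ ε (f - g) = mollify μ ε f - mollify μ ε g := by
  funext x
  simp only [mollify, Pi.sub_apply, mul_sub]
  exact integral_sub (integrable_mollifier_mul μ (by fun_prop))
    (integrable_mollifier_mul μ (by fun_prop))

theorem mollify_affine {ε : ℝ} (ℓ : E →L[ℝ] ℝ) (c : ℝ) :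
    mollify μ ε (fun y => ℓ y + c) = fun y => ℓ y + c := by
  funext x
  have hodd : ∫ z, mollifier μ z * ℓ z ∂μ = 0 := by
    have := integral_neg_eq_self (fun z => mollifier μ z * ℓ z) μ
    simp only [map_neg, mul_neg, integral_neg, mollifier, ContDiffBump.normed_neg] at this
    exact self_eq_neg.1 this.symm
  have hmass : ∫ z, mollifier μ z ∂μ = 1 := ContDiffBump.integral_normed _
  calc ∫ z, mollifier μ z * (ℓ (x - ε • z) + c) ∂μ
      = ∫ z, (mollifier μ z * (ℓ x + c) - ε * (mollifier μ z * ℓ z)) ∂μ := by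
        congr 1 with z
        rw [map_sub, map_smul, smul_eq_mul]
        ring
    _ = ℓ x + c := by
        rw [integral_sub (integrable_mollifier_mul μ continuous_const)
          ((integrable_mollifier_mul μ ℓ.continuous).const_mul ε), integral_mul_const,
          integral_const_mul, hodd, hmass]
        ring

theorem mollify_mem_Icc {ε a b : ℝ} (hε : 0 ≤ ε) {f : E → ℝ} (hf : Continuous f) {x : E}
    (hab : ∀ y ∈ closedBall x ε, f y ∈ Set.Icc a b) : mollify μ ε f x ∈ Set.Icc a b := by
  have hconst : ∀ c : ℝ, mollify μ ε (fun _ => c) x = c := fun c => by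
    simpa using congrFun (mollify_affine μ (ε := ε) (0 : E →L[ℝ] ℝ) c) x
  exact ⟨(hconst a).symm.trans_le
      (mollify_mono μ hε continuous_const hf fun y hy => (hab y hy).1),
    (mollify_mono μ hε hf continuous_const fun y hy => (hab y hy).2).trans_eq (hconst b)⟩

end Mollification

section DyadicSmoothing

variable {E : Type*} [NormedAddCommGroup E] [NormedSpace ℝ E] [FiniteDimensional ℝ E]
  [MeasurableSpace E] (μ : Measure E)

/-- A smooth transition from `0` where `δ ≤ 3 / 4 * r` to `1` where `5 / 4 * r ≤ δ`. -/
def cutoff (δ : E → ℝ) (r : ℝ) : E → ℝ :=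
  mollify μ (r / 8) fun y => max 0 (min 1 (4 * (δ y / r) - 7 / 2))

/-- The mollification of `f` at scale `r / 8`, turning into the one at scale `r / 4` as `δ` grows
from `3 / 4 * r` to `5 / 4 * r`. -/
def blend (δ f : E → ℝ) (r : ℝ) : E → ℝ :=
  mollify μ (r / 8) f + cutoff μ δ r • (mollify μ (r / 4) f - mollify μ (r / 8) f)

/-- The power `r` of two with `3 / 4 * r ≤ t < 3 / 2 * r`, for `0 < t`. -/
def dyadicScale (t : ℝ) : ℝ := 2 ^ Int.log 2 (4 / 3 * t)

/-- The mollification of `f` at `x` at a scale comparable to `δ x`, for a `1`-Lipschitz function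
`δ`. On the transition region `3 / 4 * r ≤ δ ≤ 5 / 4 * r` two dyadic scales are blended. -/
def smoothing (δ f : E → ℝ) (x : E) : ℝ :=
  if 0 < δ x then blend μ δ f (dyadicScale (δ x)) x else f x

theorem smoothing_of_nonpos {δ f : E → ℝ} {x : E} (hx : δ x ≤ 0) : smoothing μ δ f x = f x :=
  if_neg hx.not_gt

theorem dyadicScale_mem_Ioc {t : ℝ} (ht : 0 < t) :
    dyadicScale t ∈ Set.Ioc (2 / 3 * t) (4 / 3 * t) := by
  have hle := Int.zpow_log_le_self (b := 2) one_lt_two (r := 4 / 3 * t) (by positivity)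
  have hlt := Int.lt_zpow_succ_log_self (b := 2) one_lt_two (4 / 3 * t)
  rw [zpow_add_one₀ (by norm_num)] at hlt
  push_cast at hle hlt
  exact ⟨by rw [dyadicScale]; linarith, hle⟩

theorem dyadicScale_pos (t : ℝ) : 0 < dyadicScale t := by
  rw [dyadicScale]
  positivity

theorem dyadicScale_eq_zpow {t : ℝ} {n : ℤ}
    (ht : t ∈ Set.Ico (3 / 4 * 2 ^ n : ℝ) (3 / 2 * 2 ^ n)) : dyadicScale t = 2 ^ n := by
  have hr : (0 : ℝ) < 2 ^ n := by positivity
  have hpos : 0 < 4 / 3 * t := by linarith [ht.1]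
  have hlog : Int.log 2 (4 / 3 * t) = n := by
    refine le_antisymm (Int.lt_add_one_iff.1 ?_) ?_
    · rw [← Int.lt_zpow_iff_log_lt one_lt_two hpos, zpow_add_one₀ (by norm_num)]
      push_cast
      linarith [ht.2]
    · rw [← Int.zpow_le_iff_le_log one_lt_two hpos]
      push_cast
      linarith [ht.1]
  rw [dyadicScale, hlog]

variable [BorelSpace E] [μ.IsAddHaarMeasure] {δ f : E → ℝ} {r : ℝ} {x : E}

theorem cutoff_mem_Icc (hδ : Continuous δ) (hr : 0 ≤ r) :
    cutoff μ δ r x ∈ Set.Icc 0 1 :=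
  mollify_mem_Icc μ (by positivity) (by fun_prop)
    fun _ _ => ⟨le_max_left _ _, max_le zero_le_one (min_le_left _ _)⟩

theorem cutoff_eq_zero (hδ : LipschitzWith 1 δ) (hr : 0 < r) (hx : δ x ≤ 3 / 4 * r) :
    cutoff μ δ r x = 0 := by
  have hδc := hδ.continuous
  rw [← Set.mem_singleton_iff, ← Set.Icc_self]
  refine mollify_mem_Icc μ (by positivity) (by fun_prop) fun y hy => ?_
  have hy' : δ y / r ≤ 7 / 8 := by
    rw [div_le_iff₀ hr]
    have hlip : δ y ≤ δ x + dist y x := by simpa using hδ.le_add_mul y x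
    linarith [mem_closedBall.1 hy]
  have hle : min 1 (4 * (δ y / r) - 7 / 2) ≤ 0 := (min_le_right _ _).trans (by linarith)
  exact ⟨le_max_left _ _, max_le le_rfl hle⟩

theorem cutoff_eq_one (hδ : LipschitzWith 1 δ) (hr : 0 < r) (hx : 5 / 4 * r ≤ δ x) :
    cutoff μ δ r x = 1 := by
  have hδc := hδ.continuous
  rw [← Set.mem_singleton_iff, ← Set.Icc_self]
  refine mollify_mem_Icc μ (by positivity) (by fun_prop) fun y hy => ?_
  have hy' : 9 / 8 ≤ δ y / r := by
    rw [le_div_iff₀ hr]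
    have hlip : δ x ≤ δ y + dist x y := by simpa using hδ.le_add_mul x y
    linarith [mem_closedBall'.1 hy]
  exact ⟨le_max_of_le_right (le_min le_rfl (by linarith)), max_le zero_le_one (min_le_left _ _)⟩

theorem contDiff_cutoff (hδ : Continuous δ) (hr : r ≠ 0) :
    ContDiff ℝ (⊤ : ℕ∞) (cutoff μ δ r) :=
  contDiff_mollify μ (div_ne_zero hr (by norm_num)) (by fun_prop)

theorem contDiff_blend (hδ : Continuous δ) (hf : Continuous f) (hr : r ≠ 0) :
    ContDiff ℝ (⊤ : ℕ∞) (blend μ δ f r) := by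
  have h₁ := contDiff_mollify μ (div_ne_zero hr (by norm_num : (8 : ℝ) ≠ 0)) hf
  have h₂ := contDiff_mollify μ (div_ne_zero hr (by norm_num : (4 : ℝ) ≠ 0)) hf
  exact h₁.add ((contDiff_cutoff μ hδ hr).smul (h₂.sub h₁))

theorem blend_mem_Icc {a b : ℝ} (hδ : Continuous δ) (hf : Continuous f) (hr : 0 ≤ r)
    (hab : ∀ y ∈ closedBall x (r / 4), f y ∈ Set.Icc a b) : blend μ δ f r x ∈ Set.Icc a b := by
  have hsmall := mollify_mem_Icc μ (by positivity : 0 ≤ r / 8) hf fun y hy =>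
    hab y (closedBall_subset_closedBall (by linarith) hy)
  have hlarge := mollify_mem_Icc μ (by positivity) hf hab
  exact (convex_Icc a b).add_smul_sub_mem hsmall hlarge (cutoff_mem_Icc μ hδ hr)

theorem blend_of_le (hδ : LipschitzWith 1 δ) (hr : 0 < r) (hx : δ x ≤ 3 / 4 * r) :
    blend μ δ f r x = mollify μ (r / 8) f x := by
  simp [blend, cutoff_eq_zero μ hδ hr hx]

theorem blend_of_ge (hδ : LipschitzWith 1 δ) (hr : 0 < r) (hx : 5 / 4 * r ≤ δ x) :
    blend μ δ f r x = mollify μ (r / 4) f x := by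
  simp [blend, cutoff_eq_one μ hδ hr hx]

theorem smoothing_eq_blend (hδ : LipschitzWith 1 δ) {n : ℤ}
    (hx : δ x ∈ Set.Ioo (5 / 8 * 2 ^ n : ℝ) (3 / 2 * 2 ^ n)) :
    smoothing μ δ f x = blend μ δ f (2 ^ n) x := by
  have hn : (2 : ℝ) ^ n = 2 * 2 ^ (n - 1) := by
    rw [← zpow_one_add₀ two_ne_zero, add_sub_cancel]
  have hr : (0 : ℝ) < 2 ^ (n - 1) := by positivity
  rw [smoothing, if_pos (by linarith [hx.1])]
  obtain hlt | hle := lt_or_ge (δ x) (3 / 4 * 2 ^ n)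
  · rw [dyadicScale_eq_zpow (n := n - 1) ⟨by linarith [hx.1], by linarith⟩,
      blend_of_ge μ hδ hr (by linarith [hx.1]), blend_of_le μ hδ (by positivity) hlt.le, hn]
    ring_nf
  · rw [dyadicScale_eq_zpow ⟨hle, hx.2⟩]

theorem smoothing_eventuallyEq_blend (hδ : LipschitzWith 1 δ) (hx : 0 < δ x) :
    smoothing μ δ f =ᶠ[𝓝 x] blend μ δ f (dyadicScale (δ x)) := by
  have hscale := dyadicScale_mem_Ioc hx
  filter_upwards [hδ.continuous.continuousAt (Ioo_mem_nhds
    (by linarith [hscale.2] : 5 / 8 * dyadicScale (δ x) < δ x)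
    (by linarith [hscale.1] : δ x < 3 / 2 * dyadicScale (δ x)))] with y hy
  exact smoothing_eq_blend μ hδ hy

theorem contDiffAt_smoothing (hδ : LipschitzWith 1 δ) (hf : Continuous f) (hx : 0 < δ x) :
    ContDiffAt ℝ (⊤ : ℕ∞) (smoothing μ δ f) x :=
  (contDiff_blend μ hδ.continuous hf (dyadicScale_pos _).ne').contDiffAt.congr_of_eventuallyEq
    (smoothing_eventuallyEq_blend μ hδ hx)

theorem smoothing_mem_Icc {a b : ℝ} (hδ : Continuous δ) (hf : Continuous f) (hx : 0 < δ x)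
    (hab : ∀ y ∈ closedBall x (δ x / 2), f y ∈ Set.Icc a b) :
    smoothing μ δ f x ∈ Set.Icc a b := by
  rw [smoothing, if_pos hx]
  refine blend_mem_Icc μ hδ hf (dyadicScale_pos _).le fun y hy => hab y ?_
  exact closedBall_subset_closedBall (by linarith [(dyadicScale_mem_Ioc hx).2]) hy

theorem smoothing_sub_affine (hf : Continuous f) (ℓ : E →L[ℝ] ℝ) (c : ℝ) :
    smoothing μ δ (f - fun y => ℓ y + c) = smoothing μ δ f - fun y => ℓ y + c := by
  have hP : Continuous fun y => ℓ y + c := by fun_prop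
  funext x
  by_cases hx : 0 < δ x
  · simp only [smoothing, if_pos hx, blend, mollify_sub μ hf hP, mollify_affine, Pi.add_apply,
      Pi.sub_apply, smul_eq_mul, Pi.mul_apply]
    ring
  · simp only [smoothing, if_neg hx, Pi.sub_apply]

/-- The constants in the derivative estimates for `smoothing`; the mollification scale is always at
least `δ / 12`, whence the factor `12 ^ m`. -/
def smoothingConst (m : ℕ) : ℝ :=
  12 ^ m * (mollifierConst μ m + leibnizConst (mollifierConst μ)
    (mollifierConst μ + mollifierConst μ) m)

theorem hasScaledBound_blend {M : ℝ} (hδ : Continuous δ) (hf : Continuous f) (hr : 0 < r)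
    (hM : ∀ y ∈ closedBall x (r / 4), |f y| ≤ M) :
    HasScaledBound (mollifierConst μ + leibnizConst (mollifierConst μ)
      (mollifierConst μ + mollifierConst μ)) (r / 8) M (blend μ δ f r) x := by
  have hfine := contDiff_mollify μ (by positivity : r / 8 ≠ 0) hf
  have hcoarse := contDiff_mollify μ (by positivity : r / 4 ≠ 0) hf
  have hF₁ : HasScaledBound (mollifierConst μ) (r / 8) M (mollify μ (r / 8) f) x :=
    hasScaledBound_mollify μ (by positivity) hf fun y hy =>
      hM y (closedBall_subset_closedBall (by linarith) hy)
  have hF₂ : HasScaledBound (mollifierConst μ) (r / 8) M (mollify μ (r / 4) f) x := by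
    simpa using (hasScaledBound_mollify μ (by positivity) hf hM).mono_scale
      (t := r / 8) (c := 1) (by positivity) zero_le_one (by linarith)
  have hχ : HasScaledBound (mollifierConst μ) (r / 8) 1 (cutoff μ δ r) x :=
    hasScaledBound_mollify μ (by positivity) (by fun_prop) fun y _ => by
      rw [abs_of_nonneg (le_max_left _ _)]
      exact max_le zero_le_one (min_le_left _ _)
  have hdiff := hF₂.add hF₁.neg (by positivity) hcoarse hfine.neg
  have hprod := hχ.smul hdiff (by positivity) (contDiff_cutoff μ hδ hr.ne')
    (hcoarse.add hfine.neg)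
  rw [one_mul] at hprod
  simpa only [blend, sub_eq_add_neg] using hF₁.add hprod (by positivity) hfine
    ((contDiff_cutoff μ hδ hr.ne').smul (hcoarse.add hfine.neg))

theorem hasScaledBound_smoothing {M : ℝ} (hδ : LipschitzWith 1 δ) (hf : Continuous f)
    (hx : 0 < δ x) (hM : ∀ y ∈ closedBall x (δ x / 2), |f y| ≤ M) :
    HasScaledBound (smoothingConst μ) (δ x) M (smoothing μ δ f) x := by
  have hscale := dyadicScale_mem_Ioc hx
  have hM' : ∀ y ∈ closedBall x (dyadicScale (δ x) / 4), |f y| ≤ M := fun y hy =>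
    hM y (closedBall_subset_closedBall (by linarith [hscale.2]) hy)
  exact ((hasScaledBound_blend μ hδ.continuous hf (dyadicScale_pos _) hM').mono_scale hx.le
    (c := 12) (by norm_num) (by linarith [hscale.1])).congr (smoothing_eventuallyEq_blend μ hδ hx)

end DyadicSmoothing

section SmoothApproximation

variable {E : Type*} [NormedAddCommGroup E] [NormedSpace ℝ E] {Ω : Set E}

theorem norm_sub_taylor_le {F : Type*} [NormedAddCommGroup F] [NormedSpace ℝ F] {f : E → F}
    {L : NNReal} (hf : Differentiable ℝ f) (hL : LipschitzWith L (fderiv ℝ f)) (x y : E) :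
    ‖f y - f x - fderiv ℝ f x (y - x)‖ ≤ L * ‖y - x‖ ^ 2 := by
  have hbound : ∀ z ∈ segment ℝ x y, ‖fderiv ℝ f z - fderiv ℝ f x‖ ≤ L * ‖y - x‖ := fun z hz => by
    refine (hL.norm_sub_le z x).trans ?_
    gcongr
    exact norm_sub_le_of_mem_segment hz
  have := (convex_segment x y).norm_image_sub_le_of_norm_fderiv_le' (fun z _ => hf z) hbound
    (left_mem_segment ℝ x y) (right_mem_segment ℝ x y)
  rwa [mul_assoc, ← sq] at this

/-- `ρ` is a `C^{1,1}` modification of `f` in `Ω` that is smooth in `Ω`, with an error that vanishes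
to second order on the boundary, and whose higher derivatives blow up at the rate expected from
interior estimates. -/
structure IsSmoothApprox (Ω : Set E) (f ρ : E → ℝ) (C : ℕ → NNReal) : Prop where
  eq_of_notMem : ∀ x ∉ Ω, ρ x = f x
  contDiffAt : ∀ x ∈ Ω, ContDiffAt ℝ (⊤ : ℕ∞) ρ x
  abs_sub_le : ∀ x ∈ Ω, |ρ x - f x| ≤ C 0 * infDist x Ωᶜ ^ 2
  norm_fderiv_sub_le : ∀ x ∈ Ω, ‖fderiv ℝ ρ x - fderiv ℝ f x‖ ≤ C 1 * infDist x Ωᶜ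
  norm_iteratedFDeriv_le : ∀ x ∈ Ω, ∀ k,
    ‖iteratedFDeriv ℝ (k + 2) ρ x‖ * infDist x Ωᶜ ^ k ≤ C (k + 2)

theorem IsSmoothApprox.hasFDerivAt_of_notMem {f ρ : E → ℝ} {C : ℕ → NNReal}
    (h : IsSmoothApprox Ω f ρ C) (hf : Differentiable ℝ f) {x : E} (hx : x ∉ Ω) :
    HasFDerivAt ρ (fderiv ℝ f x) x := by
  have herr : HasFDerivAt (fun y => ρ y - f y) (0 : E →L[ℝ] ℝ) x := by
    refine Asymptotics.IsBigO.hasFDerivAt (n := 2) (.of_bound (C 0) (.of_forall fun y => ?_))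
      one_lt_two
    rw [norm_pow, norm_norm]
    by_cases hy : y ∈ Ω
    · refine (h.abs_sub_le y hy).trans ?_
      gcongr
      · exact infDist_nonneg
      · exact (infDist_le_dist_of_mem (s := Ωᶜ) hx).trans_eq (dist_eq_norm y x)
    · rw [h.eq_of_notMem y hy, sub_self, norm_zero]
      positivity
  simpa using herr.fun_add (hf x).hasFDerivAt

theorem IsSmoothApprox.norm_fderiv_sub_le' {f ρ : E → ℝ} {C : ℕ → NNReal}
    (h : IsSmoothApprox Ω f ρ C) (hf : Differentiable ℝ f) (x : E) :
    ‖fderiv ℝ ρ x - fderiv ℝ f x‖ ≤ C 1 * infDist x Ωᶜ := by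
  by_cases hx : x ∈ Ω
  · exact h.norm_fderiv_sub_le x hx
  · rw [(h.hasFDerivAt_of_notMem hf hx).fderiv, sub_self, norm_zero]
    exact mul_nonneg (C 1).2 infDist_nonneg

theorem lipschitzWith_of_segment_subset_of_notMem {F : Type*} [PseudoMetricSpace F]
    {G : E → F} {K : NNReal} (hin : ∀ x y, segment ℝ x y ⊆ Ω → dist (G x) (G y) ≤ K * dist x y)
    (hout : ∀ x, ∀ z ∉ Ω, dist (G x) (G z) ≤ K * dist x z) : LipschitzWith K G := by
  refine LipschitzWith.of_dist_le_mul fun x y => ?_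
  by_cases h : segment ℝ x y ⊆ Ω
  · exact hin x y h
  · obtain ⟨z, hz, hzΩ⟩ := Set.not_subset.1 h
    calc dist (G x) (G y) ≤ dist (G x) (G z) + dist (G y) (G z) := dist_triangle_right _ _ _
      _ ≤ K * dist x z + K * dist y z := add_le_add (hout x z hzΩ) (hout y z hzΩ)
      _ = K * dist x y := by
        rw [← mul_add, dist_comm y z, dist_add_dist_of_mem_segment hz]

theorem IsSmoothApprox.lipschitzWith_fderiv {f ρ : E → ℝ} {C : ℕ → NNReal} {L : NNReal}
    (h : IsSmoothApprox Ω f ρ C) (hf : Differentiable ℝ f)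
    (hL : LipschitzWith L (fderiv ℝ f)) : LipschitzWith (C 1 + C 2 + L) (fderiv ℝ ρ) := by
  refine lipschitzWith_of_segment_subset_of_notMem (Ω := Ω) (fun x y hxy => ?_) fun x z hz => ?_
  · have hbound : ∀ w ∈ segment ℝ x y, ‖fderiv ℝ (fderiv ℝ ρ) w‖ ≤ C 2 := fun w hw => by
      have := h.norm_iteratedFDeriv_le w (hxy hw) 0
      rwa [pow_zero, mul_one, zero_add, ← norm_iteratedFDeriv_fderiv,
        norm_iteratedFDeriv_one] at this
    have hdiff : ∀ w ∈ segment ℝ x y, DifferentiableAt ℝ (fderiv ℝ ρ) w := fun w hw =>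
      ((contDiffAt_infty.1 (h.contDiffAt w (hxy hw)) 2).fderiv_right (m := 1)
        one_add_one_eq_two.le).differentiableAt one_ne_zero
    rw [dist_eq_norm', dist_eq_norm']
    refine ((convex_segment x y).norm_image_sub_le_of_norm_fderiv_le hdiff hbound
      (left_mem_segment ℝ x y) (right_mem_segment ℝ x y)).trans ?_
    gcongr
    exact le_add_right le_add_self
  · have hdist : infDist x Ωᶜ ≤ dist x z := infDist_le_dist_of_mem hz
    have hz' := (h.hasFDerivAt_of_notMem hf hz).fderiv
    calc dist (fderiv ℝ ρ x) (fderiv ℝ ρ z)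
        ≤ dist (fderiv ℝ ρ x) (fderiv ℝ f x) + dist (fderiv ℝ f x) (fderiv ℝ f z) :=
          hz' ▸ dist_triangle _ _ _
      _ ≤ C 1 * dist x z + L * dist x z := by
          refine add_le_add ?_ (hL.dist_le_mul x z)
          rw [dist_eq_norm]
          exact (h.norm_fderiv_sub_le' hf x).trans (by gcongr)
      _ ≤ ↑(C 1 + C 2 + L) * dist x z := by
          rw [← add_mul]
          gcongr
          exact_mod_cast add_le_add_left le_self_add L

theorem IsSmoothApprox.contDiff {f ρ : E → ℝ} {C : ℕ → NNReal} {L : NNReal}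
    (h : IsSmoothApprox Ω f ρ C) (hf : Differentiable ℝ f)
    (hL : LipschitzWith L (fderiv ℝ f)) : ContDiff ℝ 1 ρ := by
  refine contDiff_one_iff_fderiv.2 ⟨fun x => ?_, (h.lipschitzWith_fderiv hf hL).continuous⟩
  by_cases hx : x ∈ Ω
  · exact (h.contDiffAt x hx).differentiableAt (by simp)
  · exact (h.hasFDerivAt_of_notMem hf hx).differentiableAt

theorem IsSmoothApprox.norm_iteratedFDeriv_mul_pow_le {f ρ : E → ℝ} {C : ℕ → NNReal} {b : ℝ}
    (h : IsSmoothApprox Ω f ρ C) {x : E} (hx : x ∈ Ω) (hρ : ρ x ∈ Set.Icc 0 (b * infDist x Ωᶜ))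
    (hb : 0 ≤ b) (k : ℕ) :
    ‖iteratedFDeriv ℝ (k + 2) ρ x‖ * ρ x ^ k ≤ C (k + 2) * b ^ k := by
  calc ‖iteratedFDeriv ℝ (k + 2) ρ x‖ * ρ x ^ k
      ≤ ‖iteratedFDeriv ℝ (k + 2) ρ x‖ * (b * infDist x Ωᶜ) ^ k := by
        gcongr
        exacts [hρ.1, hρ.2]
    _ = ‖iteratedFDeriv ℝ (k + 2) ρ x‖ * infDist x Ωᶜ ^ k * b ^ k := by ring
    _ ≤ C (k + 2) * b ^ k := by
        gcongr
        exact h.norm_iteratedFDeriv_le x hx k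

theorem iteratedFDeriv_add_two_affine {F : Type*} [NormedAddCommGroup F] [NormedSpace ℝ F]
    (ℓ : E →L[ℝ] F) (c : F) (k : ℕ) (x : E) :
    iteratedFDeriv ℝ (k + 2) (fun y => ℓ y + c) x = 0 := by
  have hfderiv : fderiv ℝ (fun y => ℓ y + c) = fun _ => ℓ := by
    funext y
    rw [fderiv_add_const, ℓ.fderiv]
  rw [← norm_eq_zero, ← norm_iteratedFDeriv_fderiv, hfderiv,
    iteratedFDeriv_const_of_ne k.succ_ne_zero, Pi.zero_apply, norm_zero]

theorem infDist_compl_pos {X : Type*} [PseudoMetricSpace X] {s : Set X} (hs : IsOpen s)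
    (hne : s ≠ Set.univ) {x : X} (hx : x ∈ s) : 0 < infDist x sᶜ :=
  (hs.isClosed_compl.notMem_iff_infDist_pos (Set.nonempty_compl.2 hne)).1 (not_not.2 hx)

variable [FiniteDimensional ℝ E] [MeasurableSpace E] [BorelSpace E] (μ : Measure E)
  [μ.IsAddHaarMeasure] {f : E → ℝ} {L : NNReal}

theorem hasScaledBound_smoothing_sub_taylor {δ : E → ℝ} (hδ : LipschitzWith 1 δ)
    (hf : Differentiable ℝ f) (hL : LipschitzWith L (fderiv ℝ f)) {x : E} (hx : 0 < δ x) :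
    HasScaledBound (smoothingConst μ) (δ x) (L * δ x ^ 2)
      (smoothing μ δ f - fun y => fderiv ℝ f x y + (f x - fderiv ℝ f x x)) x := by
  rw [← smoothing_sub_affine μ hf.continuous]
  refine hasScaledBound_smoothing μ hδ (hf.continuous.sub (by fun_prop)) hx fun y hy => ?_
  rw [mem_closedBall, dist_eq_norm] at hy
  calc |f y - (fderiv ℝ f x y + (f x - fderiv ℝ f x x))|
      = ‖f y - f x - fderiv ℝ f x (y - x)‖ := by
        rw [map_sub, Real.norm_eq_abs]
        ring_nf
    _ ≤ L * ‖y - x‖ ^ 2 := norm_sub_taylor_le hf hL x y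
    _ ≤ L * δ x ^ 2 := by
        gcongr
        linarith

theorem isSmoothApprox_smoothing (hΩ : IsOpen Ω) (hne : Ω ≠ Set.univ) (hf : Differentiable ℝ f)
    (hL : LipschitzWith L (fderiv ℝ f)) :
    IsSmoothApprox Ω f (smoothing μ (infDist · Ωᶜ) f)
      fun m => (smoothingConst μ m * L).toNNReal := by
  have hδ : LipschitzWith 1 (infDist · Ωᶜ) := lipschitz_infDist_pt _
  have hpos : ∀ x ∈ Ω, 0 < infDist x Ωᶜ := fun x => infDist_compl_pos hΩ hne
  have hsmooth : ∀ x ∈ Ω, ContDiffAt ℝ (⊤ : ℕ∞) (smoothing μ (infDist · Ωᶜ) f) x := fun x hx =>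
    contDiffAt_smoothing μ hδ hf.continuous (hpos x hx)
  have hbound : ∀ x ∈ Ω, ∀ m, _ := fun x hx m =>
    (hasScaledBound_smoothing_sub_taylor μ hδ hf hL (hpos x hx) m).trans
      ((mul_assoc _ _ _).symm.trans_le
        (mul_le_mul_of_nonneg_right (Real.le_coe_toNNReal _) (sq_nonneg _)))
  refine ⟨fun x hx => smoothing_of_nonpos μ (infDist_zero_of_mem hx).le, hsmooth,
    fun x hx => ?_, fun x hx => ?_, fun x hx k => ?_⟩
  · simpa [norm_iteratedFDeriv_zero] using hbound x hx 0
  · have := hbound x hx 1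
    rw [norm_iteratedFDeriv_one, fderiv_sub ((hsmooth x hx).differentiableAt (by simp))
      (by fun_prop), fderiv_add_const, ContinuousLinearMap.fderiv, pow_one, sq, ← mul_assoc] at this
    exact le_of_mul_le_mul_right this (hpos x hx)
  · have := hbound x hx (k + 2)
    rw [iteratedFDeriv_sub_apply (contDiffAt_infty.1 (hsmooth x hx) _) (by fun_prop),
      iteratedFDeriv_add_two_affine, sub_zero, pow_add, ← mul_assoc] at this
    exact le_of_mul_le_mul_right this (pow_pos (hpos x hx) 2)

end SmoothApproximation

section RegularizedDistance

variable {E : Type*} [NormedAddCommGroup E] [NormedSpace ℝ E] [FiniteDimensional ℝ E] {Ω : Set E}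

theorem smoothing_infDist_compl_mem_Icc [MeasurableSpace E] [BorelSpace E] (μ : Measure E)
    [μ.IsAddHaarMeasure] (hΩ : IsOpen Ω) (hne : Ω ≠ Set.univ) {f : E → ℝ} (hf : Continuous f)
    {a b : ℝ} (ha : 0 ≤ a) (hb : 0 ≤ b)
    (hfab : ∀ y ∈ Ω, f y ∈ Set.Icc (a * infDist y Ωᶜ) (b * infDist y Ωᶜ)) {x : E} (hx : x ∈ Ω) :
    smoothing μ (infDist · Ωᶜ) f x ∈
      Set.Icc (a / 2 * infDist x Ωᶜ) (2 * b * infDist x Ωᶜ) := by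
  have hpos : 0 < infDist x Ωᶜ := infDist_compl_pos hΩ hne hx
  refine smoothing_mem_Icc μ (continuous_infDist_pt _) hf hpos fun y hy => ?_
  have hlower : infDist x Ωᶜ ≤ infDist y Ωᶜ + infDist x Ωᶜ / 2 :=
    infDist_le_infDist_add_dist.trans (add_le_add_right (mem_closedBall'.1 hy) _)
  have hupper : infDist y Ωᶜ ≤ infDist x Ωᶜ + infDist x Ωᶜ / 2 :=
    infDist_le_infDist_add_dist.trans (add_le_add_right (mem_closedBall.1 hy) _)
  have hyΩ : y ∈ Ω := by
    by_contra h
    linarith [infDist_zero_of_mem (s := Ωᶜ) h]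
  refine ⟨le_trans ?_ (hfab y hyΩ).1, (hfab y hyΩ).2.trans ?_⟩
  · rw [div_mul_eq_mul_div, mul_div_assoc]
    gcongr
    linarith
  · rw [mul_comm 2 b, mul_assoc]
    gcongr
    linarith

theorem HasC11Boundary.exists_isSmoothApprox (hb : Bornology.IsBounded Ω) (hΩ : HasC11Boundary Ω)
    (hne : Ω ≠ Set.univ) :
    ∃ (f ρ : E → ℝ) (C : ℕ → NNReal) (a b : ℝ) (L : NNReal), 0 < a ∧ 0 < b ∧
      ContDiff ℝ 1 f ∧ LipschitzWith L (fderiv ℝ f) ∧ (∀ x ∈ frontier Ω, fderiv ℝ f x ≠ 0) ∧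
      IsSmoothApprox Ω f ρ C ∧
      ∀ x ∈ Ω, ρ x ∈ Set.Icc (a * infDist x Ωᶜ) (b * infDist x Ωᶜ) := by
  obtain ⟨f, hf⟩ := hΩ.exists_isDefiningOn hb
  obtain ⟨c, hc, hcf⟩ := hf.exists_definesAt
  obtain ⟨L, hL⟩ := exists_lipschitzWith_fderiv hf.isC11At hf.hasCompactSupport
  have hfC1 : ContDiff ℝ 1 f := contDiff_iff_contDiffAt.2 fun x => (hf.isC11At x).1
  have hfd : Differentiable ℝ f := hfC1.differentiable one_ne_zero
  obtain ⟨M, hM⟩ := hfC1.lipschitzWith_of_hasCompactSupport hf.hasCompactSupport one_ne_zero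
  have hsize : ∀ y ∈ Ω, f y ∈ Set.Icc (c * infDist y Ωᶜ) ((M + 1 : NNReal) * infDist y Ωᶜ) :=
    fun y hy => ⟨(hcf y (subset_closure hy)).1 hy,
      le_mul_infDist_compl (hM.weaken le_self_add) hf.eq_zero hne hy⟩
  borelize E
  exact ⟨f, _, _, c / 2, 2 * (M + 1 : NNReal), L, half_pos hc, by positivity, hfC1, hL,
    fun x hx => (hcf x hx.1).fderiv_ne_zero hc hx (hfd x),
    isSmoothApprox_smoothing Measure.addHaar hΩ.isOpen hne hfd hL, fun x hx =>
      smoothing_infDist_compl_mem_Icc _ hΩ.isOpen hne hfd.continuous hc.le (by positivity) hsize hx⟩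

theorem regularized_distance_general (hb : Bornology.IsBounded Ω) (hΩ : HasC11Boundary Ω) :
    ∃ (ρ : E → ℝ) (c C C₀ L : ℝ), 0 < c ∧ 0 < C ∧ 0 < C₀ ∧
      ContDiff ℝ 1 ρ ∧ LipschitzWith (Real.toNNReal L) (fderiv ℝ ρ) ∧
      ContDiffOn ℝ (⊤ : ℕ∞) ρ Ω ∧
      (∀ x ∈ Ω, c * infDist x (frontier Ω) ≤ ρ x ∧ ρ x ≤ C * infDist x (frontier Ω)) ∧
      (∀ x ∈ frontier Ω, C₀ ≤ ‖fderiv ℝ ρ x‖) ∧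
      ∀ k : ℕ, ∃ B : ℝ, ∀ x ∈ Ω, ‖iteratedFDeriv ℝ (k + 2) ρ x‖ * ρ x ^ k ≤ B := by
  obtain rfl | hne := eq_or_ne Ω Set.univ
  · refine ⟨0, 1, 1, 1, 0, one_pos, one_pos, one_pos, contDiff_const, ?_, contDiffOn_const, ?_, ?_,
      fun k => ⟨0, fun x _ => ?_⟩⟩
    · simp
    · simp
    · simp
    · simp
  obtain ⟨f, ρ, C, a, b, L, ha, hb₀, hf, hL, hf', h, hρ⟩ := hΩ.exists_isSmoothApprox hb hne
  have hfd : Differentiable ℝ f := hf.differentiable one_ne_zero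
  obtain ⟨C₀, hC₀, hgrad⟩ := (hb.isCompact_closure.of_isClosed_subset isClosed_frontier
    frontier_subset_closure).exists_forall_le' (hf.continuous_fderiv one_ne_zero).norm.continuousOn
    fun x hx => norm_pos_iff.2 (hf' x hx)
  refine ⟨ρ, a, b, C₀, _, ha, hb₀, hC₀, h.contDiff hfd hL,
    (Real.toNNReal_coe (r := C 1 + C 2 + L)).symm ▸ h.lipschitzWith_fderiv hfd hL,
    fun x hx => (h.contDiffAt x hx).contDiffWithinAt, fun x hx => ?_, fun x hx => ?_,
    fun k => ⟨C (k + 2) * b ^ k, fun x hx => ?_⟩⟩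
  · rw [infDist_frontier_eq_infDist_compl hx hne]
    exact hρ x hx
  · have hxΩ : x ∉ Ω := (hΩ.isOpen.frontier_eq ▸ hx).2
    rw [(h.hasFDerivAt_of_notMem hfd hxΩ).fderiv]
    exact hgrad x hx
  · exact h.norm_iteratedFDeriv_mul_pow_le hx
      ⟨(mul_nonneg ha.le infDist_nonneg).trans (hρ x hx).1, (hρ x hx).2⟩ hb₀.le k

end RegularizedDistance

/-- Lemma 3.1, regularized distance: for a bounded `C^{1,1}`
domain `Ω`, there is a regularized distance `ρ ∈ C^{1,1}(Ω̄)` (here: globally `C^1`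
with Lipschitz derivative, smooth inside `Ω`) such that
(i) `c d(x) ≤ ρ(x) ≤ C d(x)` on `Ω`;
(ii) `|Dρ| ≥ C₀ > 0` on `∂Ω`;
(iii) for every `k ≥ 1`, `|D^{k+2}ρ| ρ^k` is bounded on `Ω`. -/
theorem regularized_distance
    (d : ℕ) (K : ℝ) (Ω : Set (EucD d)) (hΩ : IsC11Domain d Ω K) :
    ∃ (ρ : EucD d → ℝ) (c C C₀ L : ℝ), 0 < c ∧ 0 < C ∧ 0 < C₀ ∧
      ContDiff ℝ 1 ρ ∧ LipschitzWith (Real.toNNReal L) (fderiv ℝ ρ) ∧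
      ContDiffOn ℝ (⊤ : ℕ∞) ρ Ω ∧
      (∀ x ∈ Ω, c * Metric.infDist x (frontier Ω) ≤ ρ x ∧
        ρ x ≤ C * Metric.infDist x (frontier Ω)) ∧
      (∀ x ∈ frontier Ω, C₀ ≤ ‖fderiv ℝ ρ x‖) ∧
      ∀ k : ℕ, 1 ≤ k → ∃ B : ℝ, ∀ x ∈ Ω,
        ‖iteratedFDeriv ℝ (k + 2) ρ x‖ * (ρ x) ^ k ≤ B := by
  obtain ⟨ρ, c, C, C₀, L, hc, hC, hC₀, hρ, hLip, hsmooth, hsize, hgrad, hbound⟩ :=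
    regularized_distance_general hΩ.2.1 hΩ.hasC11Boundary
  exact ⟨ρ, c, C, C₀, L, hc, hC, hC₀, hρ, hLip, hsmooth, hsize, hgrad, fun k _ => hbound k⟩
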